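/- Let 𝒯 be a rooted tree decomposition of a graph G=(V,E), let S ⊆ V, and let (L^S, X^S, R^S) be an S-trace with L^S ≠ ∅. Let N be the set of nodes of 𝒯 whose S-trace is (L^S, X^S, R^S), and assume N ≠ ∅. Then the subgraph of T induced by N is a directed path, i.e., a path in T each of whose edges goes from a parent to its child. -/

import Mathlib

/-! Preliminary definitions: rooted tree decompositions, `S`-traces, `S`-nice and
slim tree decompositions, following Chapelle et al. -/

/-- A walk in `G` all of whose vertices lie in the set `W`. -/
def SimpleGraph.ReachableIn {V : Type} (G : SimpleGraph V) (W : Set V) (u v : V) : Prop :=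
  ∃ p : G.Walk u v, ∀ x ∈ p.support, x ∈ W

/-- The open neighborhood of a set of vertices. -/
def SimpleGraph.nbhdSet {V : Type} (G : SimpleGraph V) (W : Set V) : Set V :=
  {x | x ∉ W ∧ ∃ w ∈ W, G.Adj w x}

/-- The vertex set of the connected component of `G − X` that contains `v`
(assuming `v ∉ X`). -/
def SimpleGraph.compOutside {V : Type} (G : SimpleGraph V) (X : Set V) (v : V) : Set V :=
  {w | G.ReachableIn Xᶜ v w}

/-- A rooted tree decomposition of a graph `G` on vertex type `V`, with node type `ι`.
The rooted tree is given by a parent function: the root is a fixed point of `parent`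
and every node reaches the root by iterating `parent`.  The bags satisfy the three
usual conditions of a tree decomposition; connectedness of `{t | v ∈ bag t}` is
expressed by the existence of a highest node `m` containing `v` such that from any
node whose bag contains `v` the whole ancestor chain up to `m` contains `v`. -/
structure RootedTreeDecomp (V ι : Type) (G : SimpleGraph V) where
  root : ι
  parent : ι → ι
  parent_root : parent root = root
  reaches_root : ∀ t : ι, ∃ n : ℕ, parent^[n] t = root
  bag : ι → Set V
  bags_cover : ∀ v : V, ∃ t : ι, v ∈ bag t
  bags_of_edges : ∀ ⦃u v : V⦄, G.Adj u v → ∃ t : ι, u ∈ bag t ∧ v ∈ bag t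
  bags_connected : ∀ v : V, ∃ m : ι, v ∈ bag m ∧
    ∀ t : ι, v ∈ bag t → ∃ n : ℕ, parent^[n] t = m ∧ ∀ i ≤ n, v ∈ bag (parent^[i] t)

namespace RootedTreeDecomp

variable {V ι : Type} {G : SimpleGraph V}

/-- `t'` lies in the subtree `T_t` rooted at `t`; equivalently, `t` is an
ancestor (possibly equal) of `t'`. -/
def InSubtree (𝒯 : RootedTreeDecomp V ι G) (t t' : ι) : Prop :=
  ∃ n : ℕ, 𝒯.parent^[n] t' = t

/-- `t` is the parent of `t'`. -/
def IsParent (𝒯 : RootedTreeDecomp V ι G) (t t' : ι) : Prop :=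
  t' ≠ 𝒯.root ∧ 𝒯.parent t' = t

/-- `V_t`: the union of the bags of the nodes of the subtree rooted at `t`. -/
def Vt (𝒯 : RootedTreeDecomp V ι G) (t : ι) : Set V :=
  {v | ∃ t', 𝒯.InSubtree t t' ∧ v ∈ 𝒯.bag t'}

/-- `L_t = V_t ∖ X_t`. -/
def Lt (𝒯 : RootedTreeDecomp V ι G) (t : ι) : Set V := 𝒯.Vt t \ 𝒯.bag t

/-- `R_t = V ∖ V_t`. -/
def Rt (𝒯 : RootedTreeDecomp V ι G) (t : ι) : Set V := (𝒯.Vt t)ᶜ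

/-- `L_t^S = L_t ∩ S`. -/
def LS (𝒯 : RootedTreeDecomp V ι G) (S : Set V) (t : ι) : Set V := 𝒯.Lt t ∩ S

/-- `X_t^S = X_t ∩ S`. -/
def XS (𝒯 : RootedTreeDecomp V ι G) (S : Set V) (t : ι) : Set V := 𝒯.bag t ∩ S

/-- `R_t^S = R_t ∩ S`. -/
def RS (𝒯 : RootedTreeDecomp V ι G) (S : Set V) (t : ι) : Set V := 𝒯.Rt t ∩ S

/-- The `S`-trace of a node `t`. -/
def STrace (𝒯 : RootedTreeDecomp V ι G) (S : Set V) (t : ι) : Set V × Set V × Set V :=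
  (𝒯.LS S t, 𝒯.XS S t, 𝒯.RS S t)

/-- Every bag has size at most `k + 1`, i.e. the width is at most `k`. -/
def WidthAtMost (𝒯 : RootedTreeDecomp V ι G) (k : ℕ) : Prop :=
  ∀ t : ι, (𝒯.bag t).ncard ≤ k + 1

/-- The width of the decomposition (max bag size minus one) is exactly `k`. -/
def HasWidth (𝒯 : RootedTreeDecomp V ι G) (k : ℕ) : Prop :=
  𝒯.WidthAtMost k ∧ ∃ t : ι, (𝒯.bag t).ncard = k + 1

/-- `t'` is an `S`-child of `t`. -/
def IsSChild (𝒯 : RootedTreeDecomp V ι G) (S : Set V) (t t' : ι) : Prop :=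
  𝒯.IsParent t t' ∧ ((𝒯.LS S t' ∪ 𝒯.XS S t') \ (𝒯.RS S t ∪ 𝒯.XS S t)).Nonempty

/-- `t` is an `S`-bottom node: `L_t^S ≠ ∅` and `t` is the bottom node of the
directed path of its own `S`-trace (every node with the same `S`-trace is an
ancestor of `t`). -/
def IsSBottom (𝒯 : RootedTreeDecomp V ι G) (S : Set V) (t : ι) : Prop :=
  (𝒯.LS S t).Nonempty ∧ ∀ t', 𝒯.STrace S t' = 𝒯.STrace S t → 𝒯.InSubtree t' t

/-- `t` admits the `S`-operation `introduce(v)`. -/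
def AdmitsIntroduce (𝒯 : RootedTreeDecomp V ι G) (S : Set V) (t : ι) (v : V) : Prop :=
  ∃ t₁, 𝒯.IsSChild S t t₁ ∧ (∀ t₂, 𝒯.IsSChild S t t₂ → t₂ = t₁) ∧
    v ∈ S ∧ v ∉ 𝒯.bag t₁ ∧ 𝒯.XS S t = 𝒯.XS S t₁ ∪ {v}

/-- `t` admits the `S`-operation `forget(v)`. -/
def AdmitsForget (𝒯 : RootedTreeDecomp V ι G) (S : Set V) (t : ι) (v : V) : Prop :=
  ∃ t₁, 𝒯.IsSChild S t t₁ ∧ (∀ t₂, 𝒯.IsSChild S t t₂ → t₂ = t₁) ∧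
    v ∈ S ∧ v ∈ 𝒯.bag t₁ ∧ 𝒯.XS S t = 𝒯.XS S t₁ \ {v}

/-- `t` admits the `S`-operation `join` with the two `S`-children `t₁, t₂`. -/
def AdmitsJoin (𝒯 : RootedTreeDecomp V ι G) (S : Set V) (t t₁ t₂ : ι) : Prop :=
  t₁ ≠ t₂ ∧ 𝒯.IsSChild S t t₁ ∧ 𝒯.IsSChild S t t₂ ∧
    (∀ t₃, 𝒯.IsSChild S t t₃ → t₃ = t₁ ∨ t₃ = t₂) ∧
    𝒯.XS S t₁ ∪ 𝒯.XS S t₂ ⊆ 𝒯.XS S t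

/-- `S`-nice tree decomposition: bags along tree edges are comparable and differ in
size by at most one, and every `S`-bottom node admits one of the `S`-operations. -/
def IsSNice (𝒯 : RootedTreeDecomp V ι G) (S : Set V) : Prop :=
  (∀ t t' : ι, 𝒯.IsParent t' t →
      (𝒯.bag t ⊆ 𝒯.bag t' ∨ 𝒯.bag t' ⊆ 𝒯.bag t) ∧
      (𝒯.bag t).ncard ≤ (𝒯.bag t').ncard + 1 ∧ (𝒯.bag t').ncard ≤ (𝒯.bag t).ncard + 1) ∧
  ∀ t : ι, 𝒯.IsSBottom S t →
    (∃ v, 𝒯.AdmitsIntroduce S t v) ∨ (∃ v, 𝒯.AdmitsForget S t v) ∨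
      (∃ t₁ t₂, 𝒯.AdmitsJoin S t t₁ t₂)

/-- Nice tree decomposition: root and leaves have empty bags, and every internal
node is an introduce, forget, or join node. -/
def IsNice (𝒯 : RootedTreeDecomp V ι G) : Prop :=
  𝒯.bag 𝒯.root = ∅ ∧
  (∀ t : ι, (∀ t', ¬𝒯.IsParent t t') → 𝒯.bag t = ∅) ∧
  ∀ t : ι, (∃ t', 𝒯.IsParent t t') →
    (∃ t', 𝒯.IsParent t t' ∧ (∀ t'', 𝒯.IsParent t t'' → t'' = t') ∧
      ((∃ v, v ∉ 𝒯.bag t' ∧ 𝒯.bag t = 𝒯.bag t' ∪ {v}) ∨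
        (∃ v, v ∈ 𝒯.bag t' ∧ 𝒯.bag t = 𝒯.bag t' \ {v}))) ∨
    (∃ t₁ t₂, t₁ ≠ t₂ ∧ 𝒯.IsParent t t₁ ∧ 𝒯.IsParent t t₂ ∧
      (∀ t₃, 𝒯.IsParent t t₃ → t₃ = t₁ ∨ t₃ = t₂) ∧
      𝒯.bag t = 𝒯.bag t₁ ∧ 𝒯.bag t = 𝒯.bag t₂)

/-- A set of nodes inducing a connected subtree of the tree: it contains a node `m`
such that from every node of the set the whole ancestor chain up to `m` stays in
the set. -/
def ConnectedNodeSet (𝒯 : RootedTreeDecomp V ι G) (A : Set ι) : Prop :=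
  ∃ m ∈ A, ∀ t ∈ A, ∃ n : ℕ, 𝒯.parent^[n] t = m ∧ ∀ i ≤ n, 𝒯.parent^[i] t ∈ A

/-- A full join tree: a non-trivial inclusion-maximal connected set of nodes all of
which share one and the same full bag `X` (of size `k + 1`). -/
def IsFullJoinTree (𝒯 : RootedTreeDecomp V ι G) (k : ℕ) (A : Set ι) (X : Set V) : Prop :=
  A.Nontrivial ∧ 𝒯.ConnectedNodeSet A ∧ X.ncard = k + 1 ∧ (∀ t ∈ A, 𝒯.bag t = X) ∧
  ∀ A' : Set ι, A ⊆ A' → 𝒯.ConnectedNodeSet A' → (∀ t ∈ A', 𝒯.bag t = X) → A' = A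

/-- `m` is the root (top node) of the node set `A`. -/
def IsTopOf (𝒯 : RootedTreeDecomp V ι G) (A : Set ι) (m : ι) : Prop :=
  m ∈ A ∧ ∀ t ∈ A, 𝒯.InSubtree m t

/-- The condition on a pair `(u, ti)` appearing in condition (7) of slimness:
either `ti` belongs to `T'_C` (it is an `S`-child of a node of the full join tree
`A` but is not itself in `A`) and `u ∈ V_{ti}`, or `ti` is the parent of the root
`tr` of the full join tree and `u ∈ V ∖ V_{tr}`. -/
def FullJoinBranch (𝒯 : RootedTreeDecomp V ι G) (S : Set V) (A : Set ι) (tr : ι)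
    (u : V) (ti : ι) : Prop :=
  (ti ∉ A ∧ (∃ ta ∈ A, 𝒯.IsSChild S ta ti) ∧ u ∈ 𝒯.Vt ti) ∨
  (tr ≠ 𝒯.root ∧ ti = 𝒯.parent tr ∧ u ∉ 𝒯.Vt tr)

/-- Slim `S`-nice tree decomposition of width `k` (the seven conditions of the
paper; a bag is *full* if it has size `k + 1`). -/
def IsSlim (𝒯 : RootedTreeDecomp V ι G) (S : Set V) (k : ℕ) : Prop :=
  -- (1) the root is not an S-bottom node
  (¬𝒯.IsSBottom S 𝒯.root) ∧
  -- (2) S-bottom nodes with two S-children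
  (∀ t t₁ t₂ : ι, 𝒯.IsSBottom S t → t₁ ≠ t₂ → 𝒯.IsSChild S t t₁ → 𝒯.IsSChild S t t₂ →
    (∃ A X, 𝒯.IsFullJoinTree k A X ∧ t ∈ A) ∨
      ((𝒯.bag t₁).ncard ≠ k + 1 ∧ (𝒯.bag t₂).ncard ≠ k + 1 ∧
        (𝒯.bag t₁).ncard ≤ (𝒯.bag t).ncard ∧ (𝒯.bag t₂).ncard ≤ (𝒯.bag t).ncard ∧
        ∀ tp, 𝒯.IsParent tp t →
          (𝒯.bag tp).ncard ≠ k + 1 ∧ (𝒯.bag tp).ncard ≤ (𝒯.bag t).ncard)) ∧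
  -- (3) S-bottom nodes with a non-full bag
  (∀ t tp : ι, 𝒯.IsSBottom S t → (𝒯.bag t).ncard ≠ k + 1 → 𝒯.IsParent tp t →
    𝒯.bag t = 𝒯.bag tp ∧ ∀ t'', 𝒯.IsSChild S tp t'' → t'' = t) ∧
  -- (4) S-bottom nodes admitting forget(v)
  (∀ t v t', 𝒯.IsSBottom S t → 𝒯.AdmitsForget S t v → 𝒯.IsSChild S t t' →
    (𝒯.bag t').ncard ≠ k + 1 →
    (∀ t₁ t₂, 𝒯.IsSChild S t' t₁ → 𝒯.IsSChild S t' t₂ → t₁ = t₂) ∧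
      ∀ t'', 𝒯.IsSChild S t' t'' → 𝒯.bag t' = 𝒯.bag t'') ∧
  -- (5) parents of S-bottom nodes with non-full bags
  (∀ t tp, 𝒯.IsSBottom S t → 𝒯.IsParent tp t → (𝒯.bag tp).ncard ≠ k + 1 →
    tp = 𝒯.root ∨ ∀ tpp, 𝒯.IsParent tpp tp → ¬𝒯.IsSBottom S tpp) ∧
  -- (6) nodes of full join trees
  (∀ A X, 𝒯.IsFullJoinTree k A X → ∀ t ∈ A,
    𝒯.IsSBottom S t ∧ ∃ t₁ t₂, t₁ ≠ t₂ ∧ 𝒯.IsSChild S t t₁ ∧ 𝒯.IsSChild S t t₂) ∧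
  -- (7) branching condition of full join trees
  (∀ A X tr, 𝒯.IsFullJoinTree k A X → 𝒯.IsTopOf A tr →
    ∀ v ∈ X \ S, ∃ u₁ u₂ u₃ : V, ∃ t₁ t₂ t₃ : ι,
      u₁ ≠ u₂ ∧ u₁ ≠ u₃ ∧ u₂ ≠ u₃ ∧ t₁ ≠ t₂ ∧ t₁ ≠ t₃ ∧ t₂ ≠ t₃ ∧
      (G.Adj v u₁ ∧ u₁ ∉ X ∧ (∃ s ∈ S, G.ReachableIn Xᶜ u₁ s) ∧
        𝒯.FullJoinBranch S A tr u₁ t₁) ∧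
      (G.Adj v u₂ ∧ u₂ ∉ X ∧ (∃ s ∈ S, G.ReachableIn Xᶜ u₂ s) ∧
        𝒯.FullJoinBranch S A tr u₂ t₂) ∧
      (G.Adj v u₃ ∧ u₃ ∉ X ∧ (∃ s ∈ S, G.ReachableIn Xᶜ u₃ s) ∧
        𝒯.FullJoinBranch S A tr u₃ t₃))

end RootedTreeDecomp

/-- `tw(G) ≤ k`: `G` admits a (rooted) tree decomposition of width at most `k`. -/
def SimpleGraph.TreewidthAtMost {V : Type} (G : SimpleGraph V) (k : ℕ) : Prop :=
  ∃ (ι : Type) (𝒯 : RootedTreeDecomp V ι G), 𝒯.WidthAtMost k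

/-!
For a vertex `v`, the nodes whose bag contains `v` have a highest node `m`, and every node `t` with
`v ∈ L_t` is an ancestor of `m`. Hence the nodes with a given `S`-trace whose first component
contains `v` lie on a single branch of the tree. On that branch they have no gaps: if `a`, `b`, `c`
are met in this order going down, then `V_c ⊆ V_b ⊆ V_a`, and by connectedness `X_a ∩ V_b ⊆ X_b` and
`X_b ∩ V_c ⊆ X_c`. If `a` and `c` have the same trace, these inclusions force `b` to have it too.
-/

namespace RootedTreeDecomp

variable {V ι : Type} {G : SimpleGraph V} {𝒯 : RootedTreeDecomp V ι G} {S : Set V} {a b c t : ι}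

/-- The depth of a node: the number of edges between it and the root. -/
noncomputable def depth (𝒯 : RootedTreeDecomp V ι G) (t : ι) : ℕ :=
  sInf {n | 𝒯.parent^[n] t = 𝒯.root}

lemma parent_iterate_depth (t : ι) : 𝒯.parent^[𝒯.depth t] t = 𝒯.root :=
  Nat.sInf_mem (𝒯.reaches_root t)

lemma parent_iterate_eq_root_iff {n : ℕ} : 𝒯.parent^[n] t = 𝒯.root ↔ 𝒯.depth t ≤ n := by
  refine ⟨fun h => Nat.sInf_le h, fun h => ?_⟩
  rw [← Nat.sub_add_cancel h, Function.iterate_add_apply, parent_iterate_depth,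
    Function.iterate_fixed 𝒯.parent_root]

lemma depth_parent_iterate (n : ℕ) (t : ι) : 𝒯.depth (𝒯.parent^[n] t) = 𝒯.depth t - n :=
  eq_of_forall_ge_iff fun k => by
    rw [← parent_iterate_eq_root_iff, ← Function.iterate_add_apply, parent_iterate_eq_root_iff,
      tsub_le_iff_right]

lemma injOn_parent_iterate (t : ι) :
    Set.InjOn (fun n => 𝒯.parent^[n] t) (Set.Iic (𝒯.depth t)) := by
  intro i hi j hj hij
  have hdepth := congrArg 𝒯.depth hij
  simp only [depth_parent_iterate] at hdepth
  simp only [Set.mem_Iic] at hi hj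
  omega

lemma inSubtree_parent_iterate (n : ℕ) (t : ι) : 𝒯.InSubtree (𝒯.parent^[n] t) t :=
  ⟨n, rfl⟩

namespace InSubtree

lemma trans (hab : 𝒯.InSubtree a b) (hbc : 𝒯.InSubtree b c) : 𝒯.InSubtree a c := by
  obtain ⟨n, rfl⟩ := hab
  obtain ⟨m, rfl⟩ := hbc
  exact ⟨n + m, Function.iterate_add_apply _ _ _ _⟩

lemma depth_le (hab : 𝒯.InSubtree a b) : 𝒯.depth a ≤ 𝒯.depth b := by
  obtain ⟨n, rfl⟩ := hab
  rw [depth_parent_iterate]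
  exact Nat.sub_le _ _

lemma parent_iterate_depth_sub (hab : 𝒯.InSubtree a b) :
    𝒯.parent^[𝒯.depth b - 𝒯.depth a] b = a := by
  obtain ⟨n, rfl⟩ := hab
  rw [depth_parent_iterate]
  rcases le_total n (𝒯.depth b) with hn | hn
  · rw [Nat.sub_sub_self hn]
  · rw [Nat.sub_eq_zero_of_le hn, Nat.sub_zero, parent_iterate_depth,
      parent_iterate_eq_root_iff.2 hn]

lemma of_depth_le (hac : 𝒯.InSubtree a c) (hbc : 𝒯.InSubtree b c)
    (hab : 𝒯.depth a ≤ 𝒯.depth b) : 𝒯.InSubtree a b := by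
  refine ⟨𝒯.depth b - 𝒯.depth a, ?_⟩
  calc 𝒯.parent^[𝒯.depth b - 𝒯.depth a] b
      = 𝒯.parent^[𝒯.depth b - 𝒯.depth a] (𝒯.parent^[𝒯.depth c - 𝒯.depth b] c) := by
        rw [hbc.parent_iterate_depth_sub]
    _ = 𝒯.parent^[𝒯.depth c - 𝒯.depth a] c := by
        rw [← Function.iterate_add_apply, add_comm, tsub_add_tsub_cancel hbc.depth_le hab]
    _ = a := hac.parent_iterate_depth_sub

lemma total (hac : 𝒯.InSubtree a c) (hbc : 𝒯.InSubtree b c) :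
    𝒯.InSubtree a b ∨ 𝒯.InSubtree b a :=
  (le_total (𝒯.depth a) (𝒯.depth b)).imp (of_depth_le hac hbc) (of_depth_le hbc hac)

lemma bijOn_parent_iterate (hab : 𝒯.InSubtree a b) :
    Set.BijOn (fun n => 𝒯.parent^[n] b) (Set.Iic (𝒯.depth b - 𝒯.depth a))
      {t | 𝒯.InSubtree a t ∧ 𝒯.InSubtree t b} := by
  refine ⟨fun n hn => ⟨?_, inSubtree_parent_iterate n b⟩,
    (injOn_parent_iterate b).mono (Set.Iic_subset_Iic.2 (Nat.sub_le _ _)), ?_⟩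
  · refine of_depth_le hab (inSubtree_parent_iterate n b) ?_
    have := hab.depth_le
    rw [Set.mem_Iic] at hn
    rw [depth_parent_iterate]
    omega
  · rintro t ⟨hat, htb⟩
    exact ⟨_, Nat.sub_le_sub_left hat.depth_le _, htb.parent_iterate_depth_sub⟩

lemma Vt_subset (hab : 𝒯.InSubtree a b) : 𝒯.Vt b ⊆ 𝒯.Vt a :=
  fun _ ⟨t, hbt, hv⟩ => ⟨t, hab.trans hbt, hv⟩

end InSubtree

lemma finite_ancestors (t : ι) : {s | 𝒯.InSubtree s t}.Finite :=
  ((Set.finite_Iic (𝒯.depth t)).image fun n => 𝒯.parent^[n] t).subset fun _ hst =>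
    ⟨_, Nat.sub_le _ _, hst.parent_iterate_depth_sub⟩

/-- A set of nodes forms a directed path: climbing from its bottom node `tbot` towards the root
visits each of its nodes exactly once in the first `n` steps. A single node is the path `n = 0`. -/
def IsDirectedPath (𝒯 : RootedTreeDecomp V ι G) (N : Set ι) : Prop :=
  ∃ (tbot : ι) (n : ℕ), Set.BijOn (fun i => 𝒯.parent^[i] tbot) (Set.Iic n) N

lemma isDirectedPath_of_convex_of_subset_ancestors {N : Set ι} {m : ι} (hN : N.Nonempty)
    (hm : ∀ t ∈ N, 𝒯.InSubtree t m)
    (hconvex : ∀ a ∈ N, ∀ c ∈ N, ∀ b, 𝒯.InSubtree a b → 𝒯.InSubtree b c → b ∈ N) :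
    𝒯.IsDirectedPath N := by
  have hfinite : N.Finite := (finite_ancestors m).subset hm
  obtain ⟨top, htop, hmin⟩ := Set.exists_min_image N 𝒯.depth hfinite hN
  obtain ⟨bot, hbot, hmax⟩ := Set.exists_max_image N 𝒯.depth hfinite hN
  have hsegment : {t | 𝒯.InSubtree top t ∧ 𝒯.InSubtree t bot} = N :=
    Set.Subset.antisymm (fun t ht => hconvex top htop bot hbot t ht.1 ht.2) fun t ht =>
      ⟨.of_depth_le (hm top htop) (hm t ht) (hmin t ht),
        .of_depth_le (hm t ht) (hm bot hbot) (hmax t ht)⟩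
  have htop_bot : 𝒯.InSubtree top bot := .of_depth_le (hm top htop) (hm bot hbot) (hmin bot hbot)
  exact ⟨bot, _, hsegment ▸ htop_bot.bijOn_parent_iterate⟩

lemma bag_subset_Vt (t : ι) : 𝒯.bag t ⊆ 𝒯.Vt t :=
  fun _ hv => ⟨t, inSubtree_parent_iterate 0 t, hv⟩

lemma exists_highest_node (𝒯 : RootedTreeDecomp V ι G) (v : V) :
    ∃ m, ∀ t, v ∈ 𝒯.bag t →
      𝒯.InSubtree m t ∧ ∀ s, 𝒯.InSubtree m s → 𝒯.InSubtree s t → v ∈ 𝒯.bag s := by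
  obtain ⟨m, -, hchain⟩ := 𝒯.bags_connected v
  refine ⟨m, fun t ht => ?_⟩
  obtain ⟨n, rfl, hbags⟩ := hchain t ht
  refine ⟨inSubtree_parent_iterate n t, fun s hms hst => ?_⟩
  have hle : 𝒯.depth t - 𝒯.depth s ≤ n := by
    have := hms.depth_le
    rw [depth_parent_iterate] at this
    omega
  exact hst.parent_iterate_depth_sub ▸ hbags _ hle

lemma InSubtree.bag_inter_Vt_subset (hab : 𝒯.InSubtree a b) : 𝒯.bag a ∩ 𝒯.Vt b ⊆ 𝒯.bag b := by
  rintro v ⟨hva, t, hbt, hvt⟩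
  obtain ⟨m, hm⟩ := 𝒯.exists_highest_node v
  exact (hm t hvt).2 b ((hm a hva).1.trans hab) hbt

lemma exists_forall_inSubtree_of_mem_Lt (𝒯 : RootedTreeDecomp V ι G) (v : V) :
    ∃ m, ∀ t, v ∈ 𝒯.Lt t → 𝒯.InSubtree t m := by
  obtain ⟨m, hm⟩ := 𝒯.exists_highest_node v
  refine ⟨m, ?_⟩
  rintro t ⟨⟨t', htt', hvt'⟩, hvt⟩
  obtain ⟨hmt', hbetween⟩ := hm t' hvt'
  exact (htt'.total hmt').resolve_right fun hmt => hvt (hbetween t hmt htt')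

lemma STrace_eq_iff :
    𝒯.STrace S a = 𝒯.STrace S b ↔
      𝒯.bag a ∩ S = 𝒯.bag b ∩ S ∧ 𝒯.Vt a ∩ S = 𝒯.Vt b ∩ S := by
  simp only [STrace, LS, XS, RS, Lt, Rt, Prod.mk.injEq, Set.ext_iff, Set.mem_inter_iff,
    Set.mem_sdiff, Set.mem_compl_iff]
  grind

lemma STrace_eq_of_inSubtree (hab : 𝒯.InSubtree a b) (hbc : 𝒯.InSubtree b c)
    (hac : 𝒯.STrace S a = 𝒯.STrace S c) : 𝒯.STrace S b = 𝒯.STrace S c := by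
  obtain ⟨hbag, hVt⟩ := STrace_eq_iff.1 hac
  have hVt_bc : 𝒯.Vt b ∩ S = 𝒯.Vt c ∩ S :=
    Set.Subset.antisymm (hVt ▸ Set.inter_subset_inter_left S hab.Vt_subset)
      (Set.inter_subset_inter_left S hbc.Vt_subset)
  have hbag_le : 𝒯.bag b ∩ S ⊆ 𝒯.bag c := fun v hv =>
    hbc.bag_inter_Vt_subset ⟨hv.1, (hVt_bc.subset ⟨bag_subset_Vt b hv.1, hv.2⟩).1⟩
  have hbag_ge : 𝒯.bag c ∩ S ⊆ 𝒯.bag b := fun v hv =>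
    hab.bag_inter_Vt_subset ⟨(hbag.superset hv).1, hbc.Vt_subset (bag_subset_Vt c hv.1)⟩
  exact STrace_eq_iff.2 ⟨Set.Subset.antisymm (Set.subset_inter hbag_le Set.inter_subset_right)
    (Set.subset_inter hbag_ge Set.inter_subset_right), hVt_bc⟩

end RootedTreeDecomp

theorem statement2_general {V ι : Type} {G : SimpleGraph V}
    (𝒯 : RootedTreeDecomp V ι G) (S L X R : Set V) (hL : L.Nonempty)
    (hN : {t : ι | 𝒯.STrace S t = (L, X, R)}.Nonempty) :
    𝒯.IsDirectedPath {t : ι | 𝒯.STrace S t = (L, X, R)} := by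
  obtain ⟨v, hv⟩ := hL
  obtain ⟨m, hm⟩ := 𝒯.exists_forall_inSubtree_of_mem_Lt v
  refine RootedTreeDecomp.isDirectedPath_of_convex_of_subset_ancestors (m := m) hN ?_ ?_
  · intro t ht
    have hLS : 𝒯.LS S t = L := congrArg Prod.fst ht
    exact hm t (hLS.superset hv).1
  · intro a ha c hc b hab hbc
    exact (RootedTreeDecomp.STrace_eq_of_inSubtree hab hbc (ha.trans hc.symm)).trans hc

/-- The set of nodes of a rooted tree decomposition having a fixed
`S`-trace `(L, X, R)` with `L ≠ ∅` induces a directed path: it is exactly the set of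
iterated parents `parent^[i] tbot`, `i ≤ n`, of some node `tbot`, and these nodes
are pairwise distinct. -/
theorem statement2 {V ι : Type} [Fintype V] [DecidableEq V] {G : SimpleGraph V}
    (𝒯 : RootedTreeDecomp V ι G) (S L X R : Set V)
    (hL : L.Nonempty)
    (hN : {t : ι | 𝒯.STrace S t = (L, X, R)}.Nonempty) :
    ∃ (tbot : ι) (n : ℕ),
      (∀ i j, i ≤ n → j ≤ n → 𝒯.parent^[i] tbot = 𝒯.parent^[j] tbot → i = j) ∧
      ∀ t : ι, 𝒯.STrace S t = (L, X, R) ↔ ∃ i ≤ n, 𝒯.parent^[i] tbot = t := by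
  obtain ⟨tbot, n, hpath⟩ := statement2_general 𝒯 S L X R hL hN
  exact ⟨tbot, n, fun i j hi hj => hpath.injOn hi hj, Set.ext_iff.1 hpath.image_eq.symm⟩
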